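/- Second variation formula: let α, β : ℝ × [0,1] → 𝔤 be smooth maps with Δ(α,β) = 0, β(ε,0) = β(ε,1) = 0 for all ε, and such that α₀ = α(0,·) is a geodesic. Then, writing β₀ = β(0,·), the energy E(ε) = (1/2)∫₀¹ ⟨α(ε,t), α(ε,t)⟩ dt satisfies E''(0) = ∫₀¹ ⟨∇_t β₀, ∇_t β₀⟩ dt + ∫₀¹ ⟨β₀, R(α₀,β₀)α₀⟩ dt. -/

import Mathlib

open scoped InnerProductSpace

/-- Partial derivative in the second variable `t` of a map `ℝ² → G`. -/
noncomputable def partialT {G : Type*} [NormedAddCommGroup G] [NormedSpace ℝ G]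
    (f : ℝ × ℝ → G) (p : ℝ × ℝ) : G :=
  fderiv ℝ f p (0, 1)

/-- Partial derivative in the first variable `ε` of a map `ℝ² → G`. -/
noncomputable def partialE {G : Type*} [NormedAddCommGroup G] [NormedSpace ℝ G]
    (f : ℝ × ℝ → G) (p : ℝ × ℝ) : G :=
  fderiv ℝ f p (1, 0)

/-!
Write `∇ₜγ = ∂ₜγ + D_α γ` and `∇_εγ = ∂_εγ + D_β γ`. Since `D` is metric, both satisfy the product
rule with respect to the inner product; since `D` is torsion-free, the homotopy condition
`Δ(α,β) = 0` says `∇_εα = ∇ₜβ`, and it also makes the commutator `[∇_ε, ∇ₜ]` equal to `R(β,α)`.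
Hence `E'(ε) = ∫ ⟪∇_εα, α⟫ = ∫ ⟪∇ₜβ, α⟫`, and differentiating once more,
`∂_ε⟪∇ₜβ, α⟫ = ‖∇ₜβ‖² + ⟪R(β,α)β, α⟫ + ⟪∇ₜ∇_εβ, α⟫`. Along a geodesic `∇ₜα = 0`, so the last term
is `∂ₜ⟪∇_εβ, α⟫`, whose integral vanishes because `∇_εβ` does at both end-points.
-/

section Product

variable {G : Type*} [NormedAddCommGroup G]

section NormedSpace

variable [NormedSpace ℝ G] {lie : G →ₗ[ℝ] G →ₗ[ℝ] G} {D : G →L[ℝ] G →L[ℝ] G}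

/-- The curvature `R(u,v)w` of the product `D` relative to the bracket `lie`. -/
noncomputable def curvature (lie : G →ₗ[ℝ] G →ₗ[ℝ] G) (D : G →L[ℝ] G →L[ℝ] G) (u v w : G) : G :=
  D u (D v w) - D v (D u w) - D (lie u v) w

theorem curvature_swap (hlie : lie.IsAlt) (u v w : G) :
    curvature lie D v u w = -curvature lie D u v w := by
  simp only [curvature, ← hlie.neg u v, map_neg, neg_apply]
  abel

theorem continuous_curvature {X : Type*} [TopologicalSpace X] {u v w : X → G}
    (htorsion : ∀ u v : G, D u v - D v u = lie u v)
    (hu : Continuous u) (hv : Continuous v) (hw : Continuous w) :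
    Continuous fun x => curvature lie D (u x) (v x) (w x) := by
  simp only [curvature, ← htorsion]
  fun_prop

end NormedSpace

variable [InnerProductSpace ℝ G] {lie : G →ₗ[ℝ] G →ₗ[ℝ] G} {D : G →L[ℝ] G →L[ℝ] G}

/-- The Koszul formula, which makes `D` the Levi-Civita product of the bracket `lie`. -/
def IsLeviCivitaProduct (lie : G →ₗ[ℝ] G →ₗ[ℝ] G) (D : G →L[ℝ] G →L[ℝ] G) : Prop :=
  ∀ u v w : G, 2 * ⟪D u v, w⟫_ℝ = ⟪lie u v, w⟫_ℝ + ⟪lie w u, v⟫_ℝ + ⟪lie w v, u⟫_ℝ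

theorem IsLeviCivitaProduct.sub_swap (hD : IsLeviCivitaProduct lie D) (hlie : lie.IsAlt)
    (u v : G) : D u v - D v u = lie u v := by
  refine ext_inner_right ℝ fun w => ?_
  have huv := hD u v w
  have hvu := hD v u w
  rw [← hlie.neg u v, inner_neg_left] at hvu
  rw [inner_sub_left]
  linarith

theorem IsLeviCivitaProduct.inner_left_eq_neg (hD : IsLeviCivitaProduct lie D) (hlie : lie.IsAlt)
    (u v w : G) : ⟪D u v, w⟫_ℝ = -⟪v, D u w⟫_ℝ := by
  have hvw := hD u v w
  have hwv := hD u w v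
  rw [← hlie.neg u w, ← hlie.neg v w, inner_neg_left, inner_neg_left] at hvw
  rw [← hlie.neg u v, inner_neg_left] at hwv
  rw [real_inner_comm (D u w) v]
  linarith

theorem inner_curvature_left_eq_neg (hmetric : ∀ u v w : G, ⟪D u v, w⟫_ℝ = -⟪v, D u w⟫_ℝ)
    (u v w z : G) : ⟪curvature lie D u v w, z⟫_ℝ = -⟪w, curvature lie D u v z⟫_ℝ := by
  simp only [curvature, inner_sub_left, inner_sub_right, hmetric]
  ring

end Product

section CovariantDerivative

variable {E : Type*} [NormedAddCommGroup E] [NormedSpace ℝ E] {G : Type*} [NormedAddCommGroup G]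

section NormedSpace

variable [NormedSpace ℝ G] {lie : G →ₗ[ℝ] G →ₗ[ℝ] G} {D : G →L[ℝ] G →L[ℝ] G}
  {α β γ ξ η : E → G} {p v w : E}

/-- The covariant derivative `∂ᵥγ + D_ξ γ` at `p` of a map `γ` in the direction `v`. The map `ξ`
is the value of the connection form on `v`: thus `∇ₜ` is the case `ξ = α`, `v = (0, 1)`, and `∇_ε`
is the case `ξ = β`, `v = (1, 0)`. -/
noncomputable def covDeriv (D : G →L[ℝ] G →L[ℝ] G) (ξ : E → G) (v : E) (γ : E → G) (p : E) : G :=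
  fderiv ℝ γ p v + D (ξ p) (γ p)

theorem contDiff_covDeriv {n : WithTop ℕ∞} (hξ : ContDiff ℝ n ξ) (hγ : ContDiff ℝ (n + 1) γ) :
    ContDiff ℝ n (covDeriv D ξ v γ) :=
  ((hγ.fderiv_right le_rfl).clm_apply contDiff_const).add
    ((D.contDiff.comp hξ).clm_apply (hγ.of_le le_self_add))

theorem differentiableAt_fderiv_apply (hγ : ContDiffAt ℝ 2 γ p) :
    DifferentiableAt ℝ (fun q => fderiv ℝ γ q v) p :=
  ((hγ.fderiv_right (m := 1) le_rfl).differentiableAt one_ne_zero).clm_apply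
    (differentiableAt_const v)

theorem differentiableAt_covDeriv (hξ : DifferentiableAt ℝ ξ p) (hγ : ContDiffAt ℝ 2 γ p) :
    DifferentiableAt ℝ (covDeriv D ξ v γ) p :=
  (differentiableAt_fderiv_apply hγ).add
    ((D.differentiableAt.comp p hξ).clm_apply (hγ.differentiableAt two_ne_zero))

theorem fderiv_fderiv_apply_comm (hγ : ContDiffAt ℝ 2 γ p) :
    fderiv ℝ (fun q => fderiv ℝ γ q v) p w = fderiv ℝ (fun q => fderiv ℝ γ q w) p v := by
  have hdiff : DifferentiableAt ℝ (fderiv ℝ γ) p :=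
    (hγ.fderiv_right (m := 1) le_rfl).differentiableAt one_ne_zero
  simpa [fderiv_clm_apply hdiff (differentiableAt_const _)] using
    (hγ.isSymmSndFDerivAt (by simp)).eq w v

theorem covDeriv_covDeriv (hξ : DifferentiableAt ℝ ξ p) (hγ : ContDiffAt ℝ 2 γ p) :
    covDeriv D η w (covDeriv D ξ v γ) p =
      fderiv ℝ (fun q => fderiv ℝ γ q v) p w
        + (D (ξ p) (fderiv ℝ γ p w) + D (fderiv ℝ ξ p w) (γ p))
        + D (η p) (covDeriv D ξ v γ p) := by
  have hDγ := D.hasFDerivAt_of_bilinear hξ.hasFDerivAt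
    (hγ.differentiableAt two_ne_zero).hasFDerivAt
  have hsum : HasFDerivAt (covDeriv D ξ v γ) _ p :=
    (differentiableAt_fderiv_apply hγ).hasFDerivAt.add hDγ
  rw [covDeriv, hsum.fderiv]
  rfl

theorem covDeriv_covDeriv_sub_swap (hα : DifferentiableAt ℝ α p) (hβ : DifferentiableAt ℝ β p)
    (hγ : ContDiffAt ℝ 2 γ p) :
    covDeriv D β w (covDeriv D α v γ) p - covDeriv D α v (covDeriv D β w γ) p =
      curvature lie D (β p) (α p) (γ p)
        + D (fderiv ℝ α p w - fderiv ℝ β p v + lie (β p) (α p)) (γ p) := by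
  rw [covDeriv_covDeriv hα hγ, covDeriv_covDeriv hβ hγ, fderiv_fderiv_apply_comm hγ]
  simp only [covDeriv, curvature, map_add, map_sub, add_apply, sub_apply]
  abel

theorem covDeriv_covDeriv_sub_swap_of_homotopy (hlie : lie.IsAlt)
    (hα : DifferentiableAt ℝ α p) (hβ : DifferentiableAt ℝ β p) (hγ : ContDiffAt ℝ 2 γ p)
    (hΔ : fderiv ℝ β p v - fderiv ℝ α p w + lie (α p) (β p) = 0) :
    covDeriv D β w (covDeriv D α v γ) p - covDeriv D α v (covDeriv D β w γ) p =
      curvature lie D (β p) (α p) (γ p) := by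
  have hΔ' : fderiv ℝ α p w - fderiv ℝ β p v + lie (β p) (α p) = 0 := by
    rw [← hlie.neg, ← neg_eq_zero, ← hΔ]
    abel
  rw [covDeriv_covDeriv_sub_swap (lie := lie) hα hβ hγ, hΔ', map_zero, zero_apply, add_zero]

theorem covDeriv_eq_covDeriv_of_homotopy (htorsion : ∀ u v : G, D u v - D v u = lie u v)
    (hΔ : fderiv ℝ β p v - fderiv ℝ α p w + lie (α p) (β p) = 0) :
    covDeriv D β w α p = covDeriv D α v β p := by
  rw [← htorsion] at hΔ
  rw [covDeriv, covDeriv, eq_comm, ← sub_eq_zero, ← hΔ]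
  abel

end NormedSpace

variable [InnerProductSpace ℝ G] {lie : G →ₗ[ℝ] G →ₗ[ℝ] G} {D : G →L[ℝ] G →L[ℝ] G}
  {α β γ δ : E → G} {p v w : E}

theorem fderiv_inner_eq_covDeriv (hmetric : ∀ u v w : G, ⟪D u v, w⟫_ℝ = -⟪v, D u w⟫_ℝ)
    (ξ : E → G) (hγ : DifferentiableAt ℝ γ p) (hδ : DifferentiableAt ℝ δ p) :
    fderiv ℝ (fun q => ⟪γ q, δ q⟫_ℝ) p v =
      ⟪covDeriv D ξ v γ p, δ p⟫_ℝ + ⟪γ p, covDeriv D ξ v δ p⟫_ℝ := by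
  rw [fderiv_inner_apply ℝ hγ hδ, covDeriv, covDeriv, inner_add_left, inner_add_right, hmetric]
  ring

theorem fderiv_inner_covDeriv_of_homotopy (hlie : lie.IsAlt) (hD : IsLeviCivitaProduct lie D)
    (hα : DifferentiableAt ℝ α p) (hβ : ContDiffAt ℝ 2 β p)
    (hΔ : fderiv ℝ β p v - fderiv ℝ α p w + lie (α p) (β p) = 0)
    (hgeo : covDeriv D α v α p = 0) :
    fderiv ℝ (fun q => ⟪covDeriv D α v β q, α q⟫_ℝ) p w =
      fderiv ℝ (fun q => ⟪covDeriv D β w β q, α q⟫_ℝ) p v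
        + (⟪covDeriv D α v β p, covDeriv D α v β p⟫_ℝ
          + ⟪β p, curvature lie D (α p) (β p) (α p)⟫_ℝ) := by
  have hmetric := hD.inner_left_eq_neg hlie
  have hβ₁ : DifferentiableAt ℝ β p := hβ.differentiableAt two_ne_zero
  have hcomm : covDeriv D β w (covDeriv D α v β) p =
      covDeriv D α v (covDeriv D β w β) p + curvature lie D (β p) (α p) (β p) :=
    eq_add_of_sub_eq' (covDeriv_covDeriv_sub_swap_of_homotopy hlie hα hβ₁ hβ hΔ)
  have hcurv : ⟪curvature lie D (β p) (α p) (β p), α p⟫_ℝ =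
      ⟪β p, curvature lie D (α p) (β p) (α p)⟫_ℝ := by
    rw [inner_curvature_left_eq_neg hmetric, curvature_swap hlie, inner_neg_right, neg_neg]
  rw [fderiv_inner_eq_covDeriv hmetric β (differentiableAt_covDeriv hα hβ) hα,
    fderiv_inner_eq_covDeriv hmetric α (differentiableAt_covDeriv hβ₁ hβ) hα, hcomm,
    covDeriv_eq_covDeriv_of_homotopy (hD.sub_swap hlie) hΔ, hgeo, inner_add_left, hcurv,
    inner_zero_right]
  ring

end CovariantDerivative

section PartialDerivative

variable {F : Type*} [NormedAddCommGroup F] [NormedSpace ℝ F] {f : ℝ × ℝ → F} {e t : ℝ}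

theorem hasDerivAt_partialE (hf : DifferentiableAt ℝ f (e, t)) :
    HasDerivAt (fun e => f (e, t)) (partialE f (e, t)) e :=
  hf.hasFDerivAt.comp_hasDerivAt e ((hasDerivAt_id e).prodMk (hasDerivAt_const e t))

theorem hasDerivAt_partialT (hf : DifferentiableAt ℝ f (e, t)) :
    HasDerivAt (fun t => f (e, t)) (partialT f (e, t)) t :=
  hf.hasFDerivAt.comp_hasDerivAt t ((hasDerivAt_const t e).prodMk (hasDerivAt_id t))

theorem continuous_partialE (hf : ContDiff ℝ 1 f) : Continuous (partialE f) :=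
  (hf.continuous_fderiv one_ne_zero).clm_apply continuous_const

theorem continuous_partialT (hf : ContDiff ℝ 1 f) : Continuous (partialT f) :=
  (hf.continuous_fderiv one_ne_zero).clm_apply continuous_const

theorem hasDerivAt_intervalIntegral_partialE (hf : ContDiff ℝ 1 f) (a b e : ℝ) :
    HasDerivAt (fun e => ∫ t in a..b, f (e, t)) (∫ t in a..b, partialE f (e, t)) e := by
  have hslice : ∀ x, Continuous fun t => f (x, t) := fun x => hf.continuous.comp (by fun_prop)
  have hslice' : Continuous fun t => partialE f (e, t) :=
    (continuous_partialE hf).comp (by fun_prop)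
  obtain ⟨C, hC⟩ := ((isCompact_closedBall e 1).prod
    (isCompact_uIcc (a := a) (b := b))).exists_bound_of_continuousOn
      (continuous_partialE hf).continuousOn
  refine (intervalIntegral.hasDerivAt_integral_of_dominated_loc_of_deriv_le
    (F' := fun e t => partialE f (e, t)) (bound := fun _ => C)
    (Metric.closedBall_mem_nhds e one_pos)
    (.of_forall fun x => (hslice x).aestronglyMeasurable) ((hslice e).intervalIntegrable a b)
    hslice'.aestronglyMeasurable (.of_forall fun t ht x hx => ?_) intervalIntegrable_const
    (.of_forall fun t _ x _ => hasDerivAt_partialE (hf.differentiable one_ne_zero _))).2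
  exact hC (x, t) ⟨hx, Set.uIoc_subset_uIcc ht⟩

theorem integral_partialT [CompleteSpace F] (hf : ContDiff ℝ 1 f) (a b e : ℝ) :
    ∫ t in a..b, partialT f (e, t) = f (e, b) - f (e, a) :=
  intervalIntegral.integral_eq_sub_of_hasDerivAt
    (fun _ _ => hasDerivAt_partialT (hf.differentiable one_ne_zero _))
    (((continuous_partialT hf).comp (by fun_prop)).intervalIntegrable a b)

end PartialDerivative

section Energy

variable {G : Type*} [NormedAddCommGroup G] [InnerProductSpace ℝ G]
  {lie : G →ₗ[ℝ] G →ₗ[ℝ] G} {D : G →L[ℝ] G →L[ℝ] G} {α β : ℝ × ℝ → G} {a b e t : ℝ}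

/-- The energy `½ ∫ ⟪α(e,t), α(e,t)⟫ dt` over `[a, b]` of the path `α(e,·)`. -/
noncomputable def energy (α : ℝ × ℝ → G) (a b e : ℝ) : ℝ :=
  (1 / 2 : ℝ) * ∫ t in a..b, ⟪α (e, t), α (e, t)⟫_ℝ

theorem covDeriv_self_eq_zero (hβ : DifferentiableAt ℝ β (e, t)) (hzero : ∀ ε, β (ε, t) = 0) :
    covDeriv D β (1, 0) β (e, t) = 0 := by
  have hconst := hasDerivAt_partialE hβ
  simp only [hzero] at hconst
  have hpartial : fderiv ℝ β (e, t) (1, 0) = 0 := hconst.unique (hasDerivAt_const e 0)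
  rw [covDeriv, hpartial, hzero, map_zero, add_zero]

theorem hasDerivAt_energy_of_homotopy (hlie : lie.IsAlt) (hD : IsLeviCivitaProduct lie D)
    (hα : ContDiff ℝ 1 α)
    (hΔ : ∀ t ∈ Set.uIcc a b,
      partialT β (e, t) - partialE α (e, t) + lie (α (e, t)) (β (e, t)) = 0) :
    HasDerivAt (energy α a b) (∫ t in a..b, ⟪covDeriv D α (0, 1) β (e, t), α (e, t)⟫_ℝ) e := by
  refine ((hasDerivAt_intervalIntegral_partialE (hα.inner ℝ hα) a b e).const_mul
    (1 / 2 : ℝ)).congr_deriv ?_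
  rw [← intervalIntegral.integral_const_mul]
  refine intervalIntegral.integral_congr fun t ht => ?_
  have hdiff : DifferentiableAt ℝ α (e, t) := hα.differentiable one_ne_zero _
  have hswap : covDeriv D β (1, 0) α (e, t) = covDeriv D α (0, 1) β (e, t) :=
    covDeriv_eq_covDeriv_of_homotopy (hD.sub_swap hlie) (hΔ t ht)
  simp only [partialE, fderiv_inner_eq_covDeriv (hD.inner_left_eq_neg hlie) β hdiff hdiff, hswap]
  rw [real_inner_comm (α (e, t))]
  ring

theorem integral_partialT_inner_covDeriv_self_eq_zero (hα : ContDiff ℝ 1 α) (hβ : ContDiff ℝ 2 β)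
    (hends : ∀ ε : ℝ, β (ε, a) = 0 ∧ β (ε, b) = 0) :
    ∫ t in a..b, partialT (fun q => ⟪covDeriv D β (1, 0) β q, α q⟫_ℝ) (e, t) = 0 := by
  have hdiff : Differentiable ℝ β := hβ.differentiable two_ne_zero
  rw [integral_partialT ((contDiff_covDeriv (hβ.of_le one_le_two) hβ).inner ℝ hα),
    covDeriv_self_eq_zero (hdiff _) fun ε => (hends ε).1,
    covDeriv_self_eq_zero (hdiff _) fun ε => (hends ε).2, inner_zero_left, inner_zero_left,
    sub_zero]

theorem integral_partialE_inner_covDeriv_of_homotopy (hlie : lie.IsAlt)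
    (hD : IsLeviCivitaProduct lie D) (hα : ContDiff ℝ 1 α) (hβ : ContDiff ℝ 2 β)
    (hΔ : ∀ t ∈ Set.uIcc a b,
      partialT β (e, t) - partialE α (e, t) + lie (α (e, t)) (β (e, t)) = 0)
    (hends : ∀ ε : ℝ, β (ε, a) = 0 ∧ β (ε, b) = 0)
    (hgeo : ∀ t ∈ Set.uIcc a b, partialT α (e, t) = -(D (α (e, t)) (α (e, t)))) :
    ∫ t in a..b, partialE (fun q => ⟪covDeriv D α (0, 1) β q, α q⟫_ℝ) (e, t) =
      (∫ t in a..b, ⟪covDeriv D α (0, 1) β (e, t), covDeriv D α (0, 1) β (e, t)⟫_ℝ)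
        + ∫ t in a..b, ⟪β (e, t), curvature lie D (α (e, t)) (β (e, t)) (α (e, t))⟫_ℝ := by
  have hslice : Continuous fun t : ℝ => (e, t) := by fun_prop
  have hαc : Continuous fun t => α (e, t) := hα.continuous.comp hslice
  have hβc : Continuous fun t => β (e, t) := hβ.continuous.comp hslice
  have hcov : Continuous fun t => covDeriv D α (0, 1) β (e, t) :=
    (contDiff_covDeriv hα hβ).continuous.comp hslice
  have hkinetic : Continuous fun t =>
      ⟪covDeriv D α (0, 1) β (e, t), covDeriv D α (0, 1) β (e, t)⟫_ℝ := hcov.inner hcov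
  have hboundary : Continuous fun t =>
      partialT (fun q => ⟪covDeriv D β (1, 0) β q, α q⟫_ℝ) (e, t) :=
    (continuous_partialT ((contDiff_covDeriv (hβ.of_le one_le_two) hβ).inner ℝ hα)).comp hslice
  have hcurv : Continuous fun t =>
      ⟪β (e, t), curvature lie D (α (e, t)) (β (e, t)) (α (e, t))⟫_ℝ :=
    hβc.inner (continuous_curvature (hD.sub_swap hlie) hαc hβc hαc)
  have hintegrand : ∀ t ∈ Set.uIcc a b,
      partialE (fun q => ⟪covDeriv D α (0, 1) β q, α q⟫_ℝ) (e, t) =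
        partialT (fun q => ⟪covDeriv D β (1, 0) β q, α q⟫_ℝ) (e, t)
          + (⟪covDeriv D α (0, 1) β (e, t), covDeriv D α (0, 1) β (e, t)⟫_ℝ
            + ⟪β (e, t), curvature lie D (α (e, t)) (β (e, t)) (α (e, t))⟫_ℝ) := fun t ht =>
    fderiv_inner_covDeriv_of_homotopy hlie hD (hα.differentiable one_ne_zero _) hβ.contDiffAt
      (hΔ t ht) (eq_neg_iff_add_eq_zero.mp (hgeo t ht))
  rw [intervalIntegral.integral_congr hintegrand,
    intervalIntegral.integral_add (hboundary.intervalIntegrable a b)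
      ((hkinetic.fun_add hcurv).intervalIntegrable a b),
    integral_partialT_inner_covDeriv_self_eq_zero hα hβ hends, zero_add,
    intervalIntegral.integral_add (hkinetic.intervalIntegrable a b)
      (hcurv.intervalIntegrable a b)]

theorem second_variation_of_energy_general (hlie : lie.IsAlt) (hD : IsLeviCivitaProduct lie D)
    (hα : ContDiff ℝ 1 α) (hβ : ContDiff ℝ 2 β)
    (hΔ : ∀ p : ℝ × ℝ, p.2 ∈ Set.uIcc a b →
      partialT β p - partialE α p + lie (α p) (β p) = 0)
    (hends : ∀ ε : ℝ, β (ε, a) = 0 ∧ β (ε, b) = 0)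
    (hgeo : ∀ t ∈ Set.uIcc a b, partialT α (e, t) = -(D (α (e, t)) (α (e, t)))) :
    HasDerivAt (deriv (energy α a b))
      ((∫ t in a..b, ⟪covDeriv D α (0, 1) β (e, t), covDeriv D α (0, 1) β (e, t)⟫_ℝ)
        + ∫ t in a..b, ⟪β (e, t), curvature lie D (α (e, t)) (β (e, t)) (α (e, t))⟫_ℝ) e := by
  have hfirst : deriv (energy α a b) =
      fun ε => ∫ t in a..b, ⟪covDeriv D α (0, 1) β (ε, t), α (ε, t)⟫_ℝ :=
    funext fun ε => (hasDerivAt_energy_of_homotopy hlie hD hα fun t ht => hΔ (ε, t) ht).deriv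
  rw [hfirst, ← integral_partialE_inner_covDeriv_of_homotopy hlie hD hα hβ
    (fun t ht => hΔ (e, t) ht) hends hgeo]
  exact hasDerivAt_intervalIntegral_partialE ((contDiff_covDeriv hα hβ).inner ℝ hα) a b e

end Energy

/-- **second variation formula.** Let `α β : ℝ × [0,1] → 𝔤` be smooth maps
with `Δ(α,β) = 0`, `β(ε,0) = β(ε,1) = 0` for all `ε`, and such that `α₀ = α(0,·)` is a
geodesic.  Then, with `β₀ = β(0,·)`, the energy `E ε = ½ ∫₀¹ ⟪α(ε,t), α(ε,t)⟫ dt` satisfies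
`E''(0) = ∫₀¹ ⟪∇ₜβ₀, ∇ₜβ₀⟫ dt + ∫₀¹ ⟪β₀, R(α₀,β₀)α₀⟫ dt`, where `∇ₜβ = ∂ₜβ + D_α β`,
`Δ(α,β) = ∂ₜβ - ∂_ε α + [α,β]`, and `R(u,v)w = D_u(D_v w) - D_v(D_u w) - D_{[u,v]}w`. -/
theorem second_variation_of_energy
    {G : Type*} [NormedAddCommGroup G] [InnerProductSpace ℝ G] [FiniteDimensional ℝ G]
    (lie : G →ₗ[ℝ] G →ₗ[ℝ] G)
    (hanti : ∀ u : G, lie u u = 0)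
    (hjac : ∀ u v w : G, lie u (lie v w) = lie (lie u v) w + lie v (lie u w))
    (D : G →ₗ[ℝ] G →ₗ[ℝ] G)
    (hD : ∀ u v w : G,
      2 * ⟪D u v, w⟫_ℝ = ⟪lie u v, w⟫_ℝ + ⟪lie w u, v⟫_ℝ + ⟪lie w v, u⟫_ℝ)
    (α β : ℝ × ℝ → G) (hα : ContDiff ℝ (⊤ : ℕ∞) α) (hβ : ContDiff ℝ (⊤ : ℕ∞) β)
    (hΔ : ∀ p : ℝ × ℝ, p.2 ∈ Set.Icc (0 : ℝ) 1 →
      partialT β p - partialE α p + lie (α p) (β p) = 0)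
    (hends : ∀ ε : ℝ, β (ε, 0) = 0 ∧ β (ε, 1) = 0)
    (hgeo : ∀ t ∈ Set.Icc (0 : ℝ) 1,
      partialT α (0, t) = -(D (α (0, t)) (α (0, t)))) :
    deriv (deriv (fun e : ℝ =>
        (1 / 2 : ℝ) * ∫ t in (0 : ℝ)..1, ⟪α (e, t), α (e, t)⟫_ℝ)) 0 =
      (∫ t in (0 : ℝ)..1,
        ⟪partialT β (0, t) + D (α (0, t)) (β (0, t)),
          partialT β (0, t) + D (α (0, t)) (β (0, t))⟫_ℝ)
      + ∫ t in (0 : ℝ)..1,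
          ⟪β (0, t),
            D (α (0, t)) (D (β (0, t)) (α (0, t)))
              - D (β (0, t)) (D (α (0, t)) (α (0, t)))
              - D (lie (α (0, t)) (β (0, t))) (α (0, t))⟫_ℝ := by
  simp only [← Set.uIcc_of_le (zero_le_one' ℝ)] at hΔ hgeo
  exact (second_variation_of_energy_general (D := D.toContinuousBilinearMap) hanti hD
    (contDiff_infty.mp hα 1) (contDiff_infty.mp hβ 2) hΔ hends hgeo).deriv
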